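/- Let E : ℕ → ℝ₊ satisfy E_n = ω(√(n·log₂ n)) and E_n = o(n), and let g : ℕ → ℝ₊ satisfy g(n) = ω(1) and g(n) = o(E_n²/(n·log₂ n)). Set m_n = ⌈2n/E_n⌉, β_n = 1 − 2g(n)/E_n and η_n = g(n)/(2n). Let (I_n) be a sequence of finite subsets of [0,1] with |I_n| ≤ n^K for some constant K. Then there exist c > 0 and N such that for all n ≥ N: if X_0, X_1, …, X_{m_n} are i.i.d. N(0, I_n) vectors, then with probability at least 1 − e^{−cn} there is no m_n-tuple (σ^(1), …, σ^(m_n)) of points of B_n satisfying both (a) β_n − η_n ≤ (1/n)⟨σ^(i), σ^(j)⟩ ≤ β_n for all 1 ≤ i < j ≤ m_n, and (b) there exist τ_1, …, τ_{m_n} ∈ I_n with n^{−1/2}|⟨σ^(i), √(1−τ_i²)·X_0 + τ_i·X_i⟩| ≤ 2^{−E_n} for all i. -/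

import Mathlib

/-!
The proof is a first-moment (union) bound over tuples `σ` and correlation parameters `τ`.

For a fixed tuple, the variables `Y_i = n^{-1/2} ⟨σ_i, √(1-τ_i²) X_0 + τ_i X_i⟩` are jointly Gaussian
with covariance `D A D + diag(τ_i²)`, where `D = diag(√(1-τ_i²))` and `A` is the Gram matrix of the
`σ_i / √n`. The overlap condition makes `A` a perturbation of `β J + (1-β) I` by entries in `[0, η]`,
so `A ≥ (1 - β - m η) I ≥ (g / 2E) I` (`gram_lower_bound`), and the covariance inherits this bound.
Instead of inverting the covariance, the probability that all `|Y_i| ≤ δ` is bounded through the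
characteristic function: `exp (-|Y|²/2δ²)` is the average of `exp (i⟨z, Y⟩/δ)` over a standard
Gaussian `z`, and exchanging the integrals gives at most `(e^{1/2} δ / √λ)^m`
(`small_ball`, `fixed_tuple_bound`).

There are `2^n` choices for the first point and at most `(n+1)^d` for each other one, because it
lies in the Hamming ball of radius `d ≤ n g / E + g / 4` around the first (`card_overlapBall_le`),
and at most `n^{K m}` choices of `τ`. With `δ = 2^{-E}` and `m ≥ 2n/E`, the factor
`δ^m ≤ 2^{-2n}` beats `2^n`; all other factors together are `exp (O(n · g n log n / E²))`, which is
`exp (o(n))` (`exponent_bound`).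
-/

open MeasureTheory ProbabilityTheory Filter

/-- The standard Gaussian measure `N(0, I_n)` on `ℝ^n`. -/
noncomputable def stdGaussian (n : ℕ) : Measure (Fin n → ℝ) :=
  Measure.pi fun _ => gaussianReal 0 1

/-- Membership in the binary cube `B_n = {-1,1}^n`. -/
def isCube {n : ℕ} (σ : Fin n → ℝ) : Prop := ∀ i, σ i = 1 ∨ σ i = -1

/-- The standard inner product on `ℝ^n`. -/
noncomputable def ip {n : ℕ} (x y : Fin n → ℝ) : ℝ := ∑ i, x i * y i

/-! ### Gaussian characteristic functions and the small-ball estimate -/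

/-- The characteristic function of the standard Gaussian on `ℝ^n`. -/
lemma integral_cexp_stdGaussian (n : ℕ) (a : Fin n → ℝ) :
    ∫ x, Complex.exp (((∑ k, a k * x k : ℝ) : ℂ) * Complex.I) ∂(_root_.stdGaussian n)
      = ((Real.exp (-(∑ k, a k ^ 2) / 2) : ℝ) : ℂ) := by
  have h1 : ∀ x : Fin n → ℝ, Complex.exp (((∑ k, a k * x k : ℝ) : ℂ) * Complex.I)
      = ∏ k, Complex.exp ((a k : ℂ) * (x k : ℂ) * Complex.I) := by
    intro x
    rw [← Complex.exp_sum]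
    push_cast
    rw [Finset.sum_mul]
  simp_rw [h1, _root_.stdGaussian]
  rw [integral_fintype_prod_eq_prod
    (fun k (y : ℝ) => Complex.exp ((a k : ℂ) * (y : ℂ) * Complex.I))]
  simp_rw [← charFun_apply_real, charFun_gaussianReal]
  rw [← Complex.exp_sum]
  push_cast
  congr 1
  simp [Finset.sum_div, neg_div]

instance instIsProbabilityMeasureStdGaussianCube (n : ℕ) :
    IsProbabilityMeasure (_root_.stdGaussian n) := by
  unfold _root_.stdGaussian
  infer_instance

/-- The characteristic function of a family of independent standard Gaussian vectors. -/
lemma integral_cexp_pi_stdGaussian (l n : ℕ) (a : Fin l → Fin n → ℝ) :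
    ∫ X, Complex.exp (((∑ j, ∑ k, a j k * X j k : ℝ) : ℂ) * Complex.I)
        ∂(Measure.pi fun _ : Fin l => _root_.stdGaussian n)
      = ((Real.exp (-(∑ j, ∑ k, a j k ^ 2) / 2) : ℝ) : ℂ) := by
  have h1 : ∀ X : Fin l → Fin n → ℝ,
      Complex.exp (((∑ j, ∑ k, a j k * X j k : ℝ) : ℂ) * Complex.I)
      = ∏ j, Complex.exp (((∑ k, a j k * X j k : ℝ) : ℂ) * Complex.I) := by
    intro x
    rw [← Complex.exp_sum, Complex.ofReal_sum, Finset.sum_mul]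
  simp_rw [h1]
  rw [integral_fintype_prod_eq_prod
    (fun j (y : Fin n → ℝ) => Complex.exp (((∑ k, a j k * y k : ℝ) : ℂ) * Complex.I))]
  simp_rw [integral_cexp_stdGaussian]
  rw [← Complex.ofReal_prod, ← Real.exp_sum, ← Finset.sum_div, Finset.sum_neg_distrib]

lemma integral_exp_neg_gaussianReal_le (s : ℝ) (hs : 0 < s) :
    ∫ z, Real.exp (-(s * z ^ 2) / 2) ∂(gaussianReal 0 1) ≤ 1 / √s := by
  rw [integral_gaussianReal_eq_integral_smul one_ne_zero]
  have h2 : ∫ z : ℝ, (√(2 * Real.pi))⁻¹ * Real.exp (-(s / 2) * z ^ 2) = 1 / √s := by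
    rw [integral_const_mul, integral_gaussian]
    have : Real.pi / (s / 2) = (2 * Real.pi) / s := by field_simp
    rw [this, Real.sqrt_div (by positivity)]
    have : √(2 * Real.pi) ≠ 0 := by positivity
    field_simp
  rw [← h2]
  have hint : Integrable (fun z : ℝ => (√(2 * Real.pi))⁻¹ * Real.exp (-(s / 2) * z ^ 2)) :=
    (integrable_exp_neg_mul_sq (by positivity)).const_mul _
  have hle : ∀ z : ℝ, gaussianPDFReal 0 1 z • Real.exp (-(s * z ^ 2) / 2)
      ≤ (√(2 * Real.pi))⁻¹ * Real.exp (-(s / 2) * z ^ 2) := by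
    intro z
    simp only [gaussianPDFReal, smul_eq_mul, NNReal.coe_one, mul_one]
    have e1 : Real.exp (-(z - 0) ^ 2 / 2) ≤ 1 := Real.exp_le_one_iff.2 (by nlinarith [sq_nonneg z])
    have e2 : -(s * z ^ 2) / 2 = -(s / 2) * z ^ 2 := by ring
    rw [e2]
    gcongr
    exact mul_le_of_le_one_right (by positivity) e1
  refine integral_mono_of_nonneg (ae_of_all _ fun z => ?_) hint (ae_of_all _ hle)
  exact mul_nonneg (gaussianPDFReal_nonneg _ _ _) (Real.exp_nonneg _)

/-- Small-ball estimate from Gaussian decay of the characteristic function. The Gaussian bump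
`exp (-|Y|² / (2δ²))`, which dominates `exp (-m/2)` on the event, is written as the average over
a standard Gaussian `z` of `exp (i ⟨z, Y⟩ / δ)`, and the two integrals are exchanged. -/
lemma small_ball {Ω : Type*} [MeasurableSpace Ω] (μ : Measure Ω) [IsProbabilityMeasure μ]
    (m : ℕ) (Y : Fin m → Ω → ℝ) (hY : ∀ i, Measurable (Y i)) (lam δ : ℝ) (hlam : 0 < lam)
    (hδ : 0 < δ)
    (hchar : ∀ t : Fin m → ℝ,
      ‖∫ ω, Complex.exp (((∑ i, t i * Y i ω : ℝ) : ℂ) * Complex.I) ∂μ‖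
        ≤ Real.exp (-(lam * ∑ i, t i ^ 2) / 2)) :
    μ.real {ω | ∀ i, |Y i ω| ≤ δ} ≤ (Real.exp (1 / 2) * (δ / √lam)) ^ m := by
  set f : Ω → ℝ := fun ω => Real.exp (-(∑ i, (Y i ω / δ) ^ 2) / 2) with hf
  have hfm : Measurable f := by fun_prop
  have hfint : Integrable f μ := by
    refine Integrable.of_bound hfm.aestronglyMeasurable 1 (ae_of_all _ fun ω => ?_)
    rw [Real.norm_eq_abs, abs_of_pos (Real.exp_pos _)]
    refine Real.exp_le_one_iff.2 ?_
    have : 0 ≤ ∑ i, (Y i ω / δ) ^ 2 := Finset.sum_nonneg fun i _ => sq_nonneg _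
    linarith
  have hmarkov := mul_meas_ge_le_integral_of_nonneg
    (ae_of_all μ fun ω => (Real.exp_nonneg _ : 0 ≤ f ω)) hfint (Real.exp (-(m : ℝ) / 2))
  have hsub : {ω | ∀ i, |Y i ω| ≤ δ} ⊆ {ω | Real.exp (-(m : ℝ) / 2) ≤ f ω} := by
    intro ω hω
    simp only [Set.mem_ofPred_eq, hf] at hω ⊢
    refine Real.exp_le_exp.2 ?_
    have : ∑ i, (Y i ω / δ) ^ 2 ≤ ∑ _i : Fin m, (1 : ℝ) := by
      refine Finset.sum_le_sum fun i _ => ?_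
      rw [sq_le_one_iff_abs_le_one, abs_div, abs_of_pos hδ]
      exact (div_le_one hδ).2 (hω i)
    simp only [Finset.sum_const, Finset.card_univ, Fintype.card_fin, nsmul_eq_mul, mul_one] at this
    linarith
  have hmono := measureReal_mono (μ := μ) hsub
  have hbound : ∫ ω, f ω ∂μ ≤ (δ / √lam) ^ m := by
    set F : Ω → (Fin m → ℝ) → ℂ := fun ω z =>
      Complex.exp (((∑ i, (Y i ω / δ) * z i : ℝ) : ℂ) * Complex.I) with hF
    have hFf : ∀ ω, ∫ z, F ω z ∂(_root_.stdGaussian m) = (f ω : ℂ) := fun ω =>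
      integral_cexp_stdGaussian m (fun i => Y i ω / δ)
    have hFint : Integrable (Function.uncurry F) (μ.prod (_root_.stdGaussian m)) := by
      refine Integrable.of_bound (Measurable.aestronglyMeasurable ?_) 1
        (ae_of_all _ fun p => ?_)
      · simp only [hF, Function.uncurry_def]
        fun_prop
      · simp only [hF, Function.uncurry_def]
        rw [Complex.norm_exp_ofReal_mul_I]
    have hswap := integral_integral_swap hFint
    simp_rw [hFf] at hswap
    rw [integral_complex_ofReal] at hswap
    have hf0 : 0 ≤ ∫ ω, f ω ∂μ := integral_nonneg fun ω => Real.exp_nonneg _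
    have hnorm : ∫ ω, f ω ∂μ = ‖∫ z, ∫ ω, F ω z ∂μ ∂(_root_.stdGaussian m)‖ := by
      rw [← hswap, Complex.norm_real, Real.norm_eq_abs, abs_of_nonneg hf0]
    rw [hnorm]
    have hpt : ∀ z : Fin m → ℝ, ‖∫ ω, F ω z ∂μ‖
        ≤ ∏ i, Real.exp (-(lam / δ ^ 2 * z i ^ 2) / 2) := by
      intro z
      have h := hchar (fun i => z i / δ)
      have e : (fun ω => F ω z) = fun ω =>
          Complex.exp (((∑ i, z i / δ * Y i ω : ℝ) : ℂ) * Complex.I) := by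
        funext ω
        simp only [hF]
        congr 3
        refine Finset.sum_congr rfl fun i _ => ?_
        ring
      rw [e]
      refine h.trans (le_of_eq ?_)
      rw [← Real.exp_sum]
      congr 1
      rw [← Finset.sum_div, Finset.sum_neg_distrib, Finset.mul_sum]
      congr 2
      refine Finset.sum_congr rfl fun i _ => ?_
      field_simp
    refine (norm_integral_le_integral_norm _).trans ?_
    have hbd : Integrable (fun z : Fin m → ℝ => ∏ i, Real.exp (-(lam / δ ^ 2 * z i ^ 2) / 2))
        (_root_.stdGaussian m) := by
      refine Integrable.of_bound (Measurable.aestronglyMeasurable (by fun_prop)) 1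
        (ae_of_all _ fun z => ?_)
      rw [Real.norm_eq_abs, abs_of_nonneg (Finset.prod_nonneg fun i _ => Real.exp_nonneg _)]
      refine Finset.prod_le_one (fun i _ => Real.exp_nonneg _) fun i _ =>
        Real.exp_le_one_iff.2 ?_
      have : 0 ≤ lam / δ ^ 2 * z i ^ 2 := by positivity
      linarith
    refine (integral_mono_of_nonneg (ae_of_all _ fun z => norm_nonneg _) hbd
      (ae_of_all _ hpt)).trans ?_
    rw [_root_.stdGaussian, integral_fintype_prod_eq_prod
      (fun _ (y : ℝ) => Real.exp (-(lam / δ ^ 2 * y ^ 2) / 2))]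
    rw [Finset.prod_const, Finset.card_univ, Fintype.card_fin]
    refine pow_le_pow_left₀ (integral_nonneg fun _ => Real.exp_nonneg _) ?_ _
    refine (integral_exp_neg_gaussianReal_le _ (by positivity)).trans (le_of_eq ?_)
    rw [Real.sqrt_div hlam.le, Real.sqrt_sq hδ.le, one_div_div]
  have hexp : Real.exp (-(m : ℝ) / 2) * Real.exp (1 / 2) ^ m = 1 := by
    rw [← Real.exp_nat_mul, ← Real.exp_add, Real.exp_eq_one_iff]
    ring
  have key : Real.exp (-(m : ℝ) / 2) * μ.real {ω | ∀ i, |Y i ω| ≤ δ} ≤ (δ / √lam) ^ m :=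
    (mul_le_mul_of_nonneg_left hmono (Real.exp_nonneg _)).trans (hmarkov.trans hbound)
  calc μ.real {ω | ∀ i, |Y i ω| ≤ δ}
      = Real.exp (1 / 2) ^ m * (Real.exp (-(m : ℝ) / 2) * μ.real {ω | ∀ i, |Y i ω| ≤ δ}) := by
        linear_combination (-μ.real {ω | ∀ i, |Y i ω| ≤ δ}) * hexp
    _ ≤ Real.exp (1 / 2) ^ m * (δ / √lam) ^ m := by gcongr
    _ = _ := by rw [mul_pow]

/-! ### Covariance of a near-equidistant tuple -/

lemma ip_self_of_isCube {n : ℕ} {σ : Fin n → ℝ} (h : isCube σ) : ip σ σ = n := by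
  have : ∀ i, σ i * σ i = 1 := fun i => by rcases h i with h | h <;> rw [h] <;> norm_num
  simp [ip, this]

lemma ip_comm' {n : ℕ} (x y : Fin n → ℝ) : ip x y = ip y x := by
  simp only [ip, mul_comm]

/-- The Gram matrix of a near-equidistant tuple is `β J + (1 - β) I` up to off-diagonal errors in
`[0, η]`, so its least eigenvalue is at least `1 - β - m η`. -/
lemma gram_lower_bound {m n : ℕ} (hn : 0 < n) (σ : Fin m → Fin n → ℝ) (hσ : ∀ i, isCube (σ i))
    (β η : ℝ) (hβ : 0 ≤ β) (hη : 0 ≤ η)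
    (hov : ∀ i j, i < j → β - η ≤ ip (σ i) (σ j) / n ∧ ip (σ i) (σ j) / n ≤ β)
    (w : Fin m → ℝ) :
    (1 - β - m * η) * ∑ i, w i ^ 2 ≤ ∑ k, (∑ i, w i * (σ i k / √n)) ^ 2 := by
  have hn' : (0 : ℝ) < n := by exact_mod_cast hn
  have hgram : ∑ k, (∑ i, w i * (σ i k / √n)) ^ 2
      = ∑ i, ∑ j, w i * w j * (ip (σ i) (σ j) / n) := by
    simp_rw [sq, Finset.sum_mul_sum]
    rw [Finset.sum_comm]
    refine Finset.sum_congr rfl fun i _ => ?_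
    rw [Finset.sum_comm]
    refine Finset.sum_congr rfl fun j _ => ?_
    rw [ip, Finset.sum_div, Finset.mul_sum]
    refine Finset.sum_congr rfl fun k _ => ?_
    have : √(n : ℝ) * √n = n := Real.mul_self_sqrt hn'.le
    rw [show w i * (σ i k / √n) * (w j * (σ j k / √n))
      = w i * w j * (σ i k * σ j k) / (√n * √n) by ring, this]
    ring
  have hterm : ∀ i j, β * (w i * w j) + (if i = j then (1 - β) * w i ^ 2 else 0)
      - η * (|w i| * |w j|) ≤ w i * w j * (ip (σ i) (σ j) / n) := by
    intro i j
    rcases eq_or_ne i j with h | h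
    · subst h
      rw [ip_self_of_isCube (hσ i), div_self hn'.ne', if_pos rfl]
      have : 0 ≤ η * (|w i| * |w i|) := by positivity
      nlinarith
    · rw [if_neg h]
      have hb : β - η ≤ ip (σ i) (σ j) / n ∧ ip (σ i) (σ j) / n ≤ β := by
        rcases lt_or_gt_of_ne h with h | h
        · exact hov i j h
        · rw [ip_comm']
          exact hov j i h
      have habs : |(w i * w j) * (β - ip (σ i) (σ j) / n)| ≤ |w i| * |w j| * η := by
        rw [abs_mul, abs_mul]
        refine mul_le_mul_of_nonneg_left ?_ (by positivity)
        rw [abs_le]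
        constructor <;> linarith [hb.1, hb.2]
      have := (abs_le.1 habs).2
      nlinarith
  have hsum := Finset.sum_le_sum fun i (_ : i ∈ Finset.univ) =>
    Finset.sum_le_sum fun j (_ : j ∈ Finset.univ) => hterm i j
  rw [← hgram] at hsum
  simp_rw [Finset.sum_sub_distrib, Finset.sum_add_distrib, ← Finset.mul_sum, Finset.sum_ite_eq,
    Finset.mem_univ, if_true] at hsum
  simp_rw [← Finset.mul_sum, ← Finset.sum_mul] at hsum
  have hcs : (∑ i, |w i|) ^ 2 ≤ m * ∑ i, w i ^ 2 := by
    have := sq_sum_le_card_mul_sum_sq (s := Finset.univ) (f := fun i => |w i|)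
    simpa [sq_abs] using this
  nlinarith [mul_le_mul_of_nonneg_left hcs hη, mul_nonneg hβ (sq_nonneg (∑ i, w i))]

/-- Small-ball bound for one fixed tuple `σ` and one fixed choice of correlations `τ`. -/
lemma fixed_tuple_bound {m n : ℕ} (hn : 0 < n) (σ : Fin m → Fin n → ℝ)
    (hσ : ∀ i, isCube (σ i)) (β η lam δ : ℝ) (hβ : 0 ≤ β) (hη : 0 ≤ η) (hlam : 0 < lam)
    (hlam1 : lam ≤ 1) (hlamle : lam ≤ 1 - β - m * η) (hδ : 0 < δ)
    (hov : ∀ i j, i < j → β - η ≤ ip (σ i) (σ j) / n ∧ ip (σ i) (σ j) / n ≤ β)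
    (τ : Fin m → ℝ) (hτ : ∀ i, τ i ∈ Set.Icc (0 : ℝ) 1) :
    (Measure.pi fun _ : Fin (m + 1) => _root_.stdGaussian n)
      {X | ∀ i, |ip (σ i) (fun k => √(1 - τ i ^ 2) * X 0 k + τ i * X i.succ k)| / √n ≤ δ}
      ≤ ENNReal.ofReal ((Real.exp (1 / 2) * (δ / √lam)) ^ m) := by
  have hn' : (0 : ℝ) < n := by exact_mod_cast hn
  set Y : Fin m → (Fin (m + 1) → Fin n → ℝ) → ℝ := fun i X =>
    ip (σ i) (fun k => √(1 - τ i ^ 2) * X 0 k + τ i * X i.succ k) / √n with hYdef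
  have hY : ∀ i, Measurable (Y i) := by
    intro i
    simp only [hYdef, ip]
    fun_prop
  have hset : {X : Fin (m + 1) → Fin n → ℝ |
      ∀ i, |ip (σ i) (fun k => √(1 - τ i ^ 2) * X 0 k + τ i * X i.succ k)| / √n ≤ δ}
      = {X | ∀ i, |Y i X| ≤ δ} := by
    ext X
    simp only [Set.mem_ofPred_eq, hYdef, abs_div, abs_of_nonneg (Real.sqrt_nonneg (n : ℝ))]
  rw [hset]
  refine (ENNReal.le_ofReal_iff_toReal_le (measure_ne_top _ _) (by positivity)).2 ?_
  refine small_ball _ m Y hY lam δ hlam hδ fun t => ?_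
  set c : Fin (m + 1) → Fin n → ℝ := Fin.cons
    (fun k => ∑ i, (t i * √(1 - τ i ^ 2)) * (σ i k / √n))
    (fun i k => t i * τ i * (σ i k / √n)) with hc
  have hlin : ∀ X : Fin (m + 1) → Fin n → ℝ, ∑ i, t i * Y i X = ∑ j, ∑ k, c j k * X j k := by
    intro X
    rw [Fin.sum_univ_succ]
    simp only [hc, Fin.cons_zero, Fin.cons_succ, hYdef, ip]
    simp_rw [Finset.sum_mul]
    rw [Finset.sum_comm, ← Finset.sum_add_distrib]
    refine Finset.sum_congr rfl fun i _ => ?_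
    rw [Finset.sum_div, Finset.mul_sum, ← Finset.sum_add_distrib]
    refine Finset.sum_congr rfl fun k _ => ?_
    ring
  simp_rw [hlin]
  rw [integral_cexp_pi_stdGaussian, Complex.norm_real, Real.norm_eq_abs,
    abs_of_pos (Real.exp_pos _)]
  refine Real.exp_le_exp.2 ?_
  have hgram := gram_lower_bound hn σ hσ β η hβ hη hov (fun i => t i * √(1 - τ i ^ 2))
  have hsucc : ∀ i, ∑ k, (t i * τ i * (σ i k / √n)) ^ 2 = t i ^ 2 * τ i ^ 2 := by
    intro i
    have h1 : ∀ k, (t i * τ i * (σ i k / √n)) ^ 2 = t i ^ 2 * τ i ^ 2 / n := by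
      intro k
      have h2 : σ i k ^ 2 = 1 := by rcases hσ i k with h | h <;> rw [h] <;> norm_num
      rw [mul_pow, mul_pow, div_pow, h2, Real.sq_sqrt hn'.le]
      ring
    simp_rw [h1]
    rw [Finset.sum_const, Finset.card_univ, Fintype.card_fin, nsmul_eq_mul]
    field_simp
  have hquad : lam * ∑ i, t i ^ 2 ≤ ∑ j, ∑ k, c j k ^ 2 := by
    rw [Fin.sum_univ_succ]
    simp only [hc, Fin.cons_zero, Fin.cons_succ]
    simp_rw [hsucc]
    have hw : ∀ i, (t i * √(1 - τ i ^ 2)) ^ 2 = t i ^ 2 * (1 - τ i ^ 2) := by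
      intro i
      rw [mul_pow, Real.sq_sqrt]
      nlinarith [(hτ i).1, (hτ i).2]
    simp_rw [hw] at hgram
    have hnn : 0 ≤ ∑ i, t i ^ 2 * (1 - τ i ^ 2) := Finset.sum_nonneg fun i _ =>
      mul_nonneg (sq_nonneg _) (by nlinarith [(hτ i).1, (hτ i).2])
    have hsplit : ∑ i, t i ^ 2 = ∑ i, t i ^ 2 * (1 - τ i ^ 2) + ∑ i, t i ^ 2 * τ i ^ 2 := by
      rw [← Finset.sum_add_distrib]
      exact Finset.sum_congr rfl fun i _ => by ring
    have hnn2 : 0 ≤ ∑ i, t i ^ 2 * τ i ^ 2 := Finset.sum_nonneg fun i _ => by positivity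
    rw [hsplit]
    nlinarith [mul_le_mul_of_nonneg_right hlamle hnn, mul_le_mul_of_nonneg_right hlam1 hnn2]
  linarith

/-! ### Counting tuples and the union bound -/

/-- The binary cube as a finite set. -/
noncomputable def cubeFinset (n : ℕ) : Finset (Fin n → ℝ) :=
  Fintype.piFinset fun _ => {1, -1}

lemma mem_cubeFinset {n : ℕ} {σ : Fin n → ℝ} : σ ∈ cubeFinset n ↔ isCube σ := by
  simp [cubeFinset, isCube]

lemma card_cubeFinset_le (n : ℕ) : (cubeFinset n).card ≤ 2 ^ n := by
  rw [cubeFinset, Fintype.card_piFinset]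
  refine (Finset.prod_le_pow_card _ _ 2 fun i _ => Finset.card_le_two).trans (by simp)

/-- The points of the cube with inner product at least `n - 2r` with `s`, i.e. the Hamming ball of
radius `r` around `s`. -/
noncomputable def overlapBall {n : ℕ} (s : Fin n → ℝ) (r : ℝ) : Finset (Fin n → ℝ) :=
  open Classical in (cubeFinset n).filter fun σ => n - 2 * r ≤ ip s σ

lemma card_overlapBall_le {n : ℕ} (s : Fin n → ℝ) (hs : isCube s) (r : ℝ) :
    (overlapBall s r).card ≤ (n + 1) ^ ⌊r⌋₊ := by
  classical
  -- A cube point is recovered from the set of coordinates where it differs from `s`.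
  have hcard : (overlapBall s r).card ≤
      ((Finset.range (⌊r⌋₊ + 1)).biUnion fun k =>
        Finset.powersetCard k (Finset.univ : Finset (Fin n))).card := by
    refine Finset.card_le_card_of_injOn (fun σ => Finset.univ.filter fun k => σ k ≠ s k) ?_ ?_
    · intro σ hσ
      simp only [overlapBall, Finset.coe_filter, Set.mem_ofPred_eq, mem_cubeFinset] at hσ
      obtain ⟨hc, hip⟩ := hσ
      have hval : ip s σ = n - 2 * ((Finset.univ.filter fun k => σ k ≠ s k).card : ℝ) := by
        have h1 : ∀ k, s k * σ k = 1 - 2 * (if σ k ≠ s k then (1 : ℝ) else 0) := by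
          intro k
          rcases hs k with h | h <;> rcases hc k with h' | h' <;> rw [h, h'] <;> norm_num
        rw [ip]
        simp_rw [h1]
        rw [Finset.sum_sub_distrib, ← Finset.mul_sum, Finset.sum_boole]
        simp
      simp only [Finset.coe_biUnion, Set.mem_iUnion, Finset.mem_coe, Finset.mem_range,
        Finset.mem_powersetCard, Finset.subset_univ, true_and, exists_prop, exists_eq_right']
      refine Nat.lt_succ_of_le (Nat.le_floor ?_)
      linarith
    · intro σ hσ σ' hσ' heq
      simp only [overlapBall, Finset.coe_filter, Set.mem_ofPred_eq, mem_cubeFinset] at hσ hσ'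
      funext k
      have hk : σ k ≠ s k ↔ σ' k ≠ s k := by
        have := Finset.ext_iff.1 heq k
        simpa using this
      rcases hs k with h | h <;> rcases hσ.1 k with h1 | h1 <;> rcases hσ'.1 k with h2 | h2 <;>
        rw [h, h1, h2] at hk <;> rw [h1, h2] <;> norm_num at hk
  refine hcard.trans (Finset.card_biUnion_le.trans ?_)
  rw [add_pow]
  refine Finset.sum_le_sum fun k hk => ?_
  rw [Finset.card_powersetCard, Finset.card_univ, Fintype.card_fin, one_pow, mul_one]
  refine (Nat.choose_le_pow n k).trans (Nat.le_mul_of_pos_right _ (Nat.choose_pos ?_))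
  exact Nat.lt_succ_iff.1 (Finset.mem_range.1 hk)

/-- First-moment bound: the union over all admissible tuples and all choices of correlations. -/
lemma union_bound {m n : ℕ} (hm : 0 < m) (hn : 0 < n) (β η lam δ : ℝ) (hβ : 0 ≤ β)
    (hη : 0 ≤ η) (hlam : 0 < lam) (hlam1 : lam ≤ 1) (hlamle : lam ≤ 1 - β - m * η)
    (hδ : 0 < δ) (J : Finset ℝ) (hJ : ↑J ⊆ Set.Icc (0 : ℝ) 1) (r : ℝ)
    (hr : n * (1 - β + η) ≤ 2 * r) :
    (Measure.pi fun _ : Fin (m + 1) => _root_.stdGaussian n)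
      {X : Fin (m + 1) → Fin n → ℝ | ∃ σ : Fin m → Fin n → ℝ, (∀ i, isCube (σ i)) ∧
        (∀ i j, i < j → β - η ≤ ip (σ i) (σ j) / n ∧ ip (σ i) (σ j) / n ≤ β) ∧
        ∃ τ : Fin m → ℝ, (∀ i, τ i ∈ J) ∧
          ∀ i, |ip (σ i) (fun k => √(1 - τ i ^ 2) * X 0 k + τ i * X i.succ k)| / √n ≤ δ}
      ≤ ENNReal.ofReal (2 ^ n * ((n + 1) ^ ⌊r⌋₊) ^ m * (J.card : ℝ) ^ m *
          (Real.exp (1 / 2) * (δ / √lam)) ^ m) := by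
  classical
  have hn' : (0 : ℝ) < n := by exact_mod_cast hn
  set μ := (Measure.pi fun _ : Fin (m + 1) => _root_.stdGaussian n) with hμ
  set p := ENNReal.ofReal ((Real.exp (1 / 2) * (δ / √lam)) ^ m) with hp
  set adm : (Fin m → Fin n → ℝ) → Prop := fun σ => (∀ i, isCube (σ i)) ∧
    (∀ i j, i < j → β - η ≤ ip (σ i) (σ j) / n ∧ ip (σ i) (σ j) / n ≤ β) with hadm
  set T : Finset (Fin m → Fin n → ℝ) := ((cubeFinset n).biUnion fun s =>
    Fintype.piFinset fun _ : Fin m => overlapBall s r).filter adm with hT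
  set P : Finset (Fin m → ℝ) := Fintype.piFinset fun _ : Fin m => J with hP
  set S : (Fin m → Fin n → ℝ) → (Fin m → ℝ) → Set (Fin (m + 1) → Fin n → ℝ) := fun σ τ =>
    {X | ∀ i, |ip (σ i) (fun k => √(1 - τ i ^ 2) * X 0 k + τ i * X i.succ k)| / √n ≤ δ} with hS
  have hcover : {X : Fin (m + 1) → Fin n → ℝ | ∃ σ : Fin m → Fin n → ℝ, (∀ i, isCube (σ i)) ∧
        (∀ i j, i < j → β - η ≤ ip (σ i) (σ j) / n ∧ ip (σ i) (σ j) / n ≤ β) ∧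
        ∃ τ : Fin m → ℝ, (∀ i, τ i ∈ J) ∧
          ∀ i, |ip (σ i) (fun k => √(1 - τ i ^ 2) * X 0 k + τ i * X i.succ k)| / √n ≤ δ}
      ⊆ ⋃ σ ∈ T, ⋃ τ ∈ P, S σ τ := by
    rintro X ⟨σ, hσ, hov, τ, hτ, hX⟩
    simp only [Set.mem_iUnion, exists_prop]
    refine ⟨σ, ?_, τ, ?_, hX⟩
    · rw [hT, Finset.mem_filter]
      refine ⟨?_, hσ, hov⟩
      rw [Finset.mem_biUnion]
      refine ⟨σ ⟨0, hm⟩, mem_cubeFinset.2 (hσ _), ?_⟩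
      rw [Fintype.mem_piFinset]
      intro j
      rw [overlapBall, Finset.mem_filter]
      refine ⟨mem_cubeFinset.2 (hσ j), ?_⟩
      rcases eq_or_ne (⟨0, hm⟩ : Fin m) j with h | h
      · rw [← h, ip_self_of_isCube (hσ _)]
        -- `1 - β + η > 0` forces `r ≥ 0`.
        have : 0 ≤ (m : ℝ) * η := by positivity
        have : 0 ≤ n * (1 - β + η) := mul_nonneg hn'.le (by linarith)
        linarith
      · have hlt : (⟨0, hm⟩ : Fin m) < j :=
          lt_of_le_of_ne (Fin.mk_le_of_le_val (Nat.zero_le _)) h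
        have := (le_div_iff₀ hn').1 (hov _ _ hlt).1
        linarith
    · rw [hP, Fintype.mem_piFinset]
      exact hτ
  have hTcard : T.card ≤ 2 ^ n * ((n + 1) ^ ⌊r⌋₊) ^ m := by
    refine (Finset.card_filter_le _ _).trans (Finset.card_biUnion_le.trans ?_)
    have : ∀ s ∈ cubeFinset n, (Fintype.piFinset fun _ : Fin m => overlapBall s r).card
        ≤ ((n + 1) ^ ⌊r⌋₊) ^ m := by
      intro s hs
      rw [Fintype.card_piFinset, Finset.prod_const, Finset.card_univ, Fintype.card_fin]
      exact Nat.pow_le_pow_left (card_overlapBall_le s (mem_cubeFinset.1 hs) r) m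
    refine (Finset.sum_le_card_nsmul _ _ _ this).trans ?_
    rw [smul_eq_mul]
    exact Nat.mul_le_mul_right _ (card_cubeFinset_le n)
  have hPcard : P.card = J.card ^ m := by
    rw [hP, Fintype.card_piFinset, Finset.prod_const, Finset.card_univ, Fintype.card_fin]
  have hSle : ∀ σ ∈ T, ∀ τ ∈ P, μ (S σ τ) ≤ p := by
    intro σ hσ τ hτ
    rw [hT, Finset.mem_filter] at hσ
    rw [hP, Fintype.mem_piFinset] at hτ
    exact fixed_tuple_bound hn σ hσ.2.1 β η lam δ hβ hη hlam hlam1 hlamle hδ hσ.2.2 τ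
      fun i => hJ (hτ i)
  calc _ ≤ μ (⋃ σ ∈ T, ⋃ τ ∈ P, S σ τ) := measure_mono hcover
    _ ≤ ∑ σ ∈ T, μ (⋃ τ ∈ P, S σ τ) := measure_biUnion_finset_le _ _
    _ ≤ ∑ σ ∈ T, ∑ τ ∈ P, μ (S σ τ) :=
        Finset.sum_le_sum fun σ _ => measure_biUnion_finset_le _ _
    _ ≤ ∑ σ ∈ T, ∑ τ ∈ P, p :=
        Finset.sum_le_sum fun σ hσ => Finset.sum_le_sum fun τ hτ => hSle σ hσ τ hτ
    _ = (T.card : ENNReal) * ((P.card : ENNReal) * p) := by simp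
    _ ≤ ((2 ^ n * ((n + 1) ^ ⌊r⌋₊) ^ m : ℕ) : ENNReal) * (((J.card ^ m : ℕ) : ENNReal) * p) := by
        rw [hPcard]
        gcongr
    _ = _ := by
        rw [hp, ← ENNReal.ofReal_natCast, ← ENNReal.ofReal_natCast,
          ← ENNReal.ofReal_mul (by positivity), ← ENNReal.ofReal_mul (by positivity)]
        congr 1
        push_cast
        ring

/-! ### Asymptotics -/

/-- The numerical core: the entropy `2 ^ n` of the first point is beaten by the small-ball factor
`2 ^ (-E m) ≤ 2 ^ (-2 n)`, and everything else is `exp (o(n))`, being at most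
`exp (n (3 K + 18) g n log n / E²)`. -/
lemma exponent_bound (n m K c d : ℕ) (E g : ℝ) (hn : 3 ≤ n) (hE : 0 < E) (hEn : E ≤ n)
    (hg : 1 ≤ g) (hc : c ≤ n ^ K) (hm1 : 2 * n / E ≤ m) (hm2 : (m : ℝ) ≤ 2 * n / E + 1)
    (hd : (d : ℝ) ≤ n * g / E + g / 4)
    (hε : g * (n * Real.log n) / E ^ 2 * (3 * K + 18) ≤ 19 / 100) :
    (2 : ℝ) ^ n * (((n : ℝ) + 1) ^ d) ^ m * (c : ℝ) ^ m *
      (Real.exp (1 / 2) * ((2 : ℝ) ^ (-E) / √(g / (2 * E)))) ^ m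
      ≤ Real.exp (-(1 / 2) * n) := by
  have hn3 : (3 : ℝ) ≤ n := by exact_mod_cast hn
  have hn' : (0 : ℝ) < n := by linarith
  have hg0 : 0 < g := by linarith
  set L := Real.log n with hL
  have hexpL : Real.exp L = n := Real.exp_log hn'
  have hL1 : 1 ≤ L := by
    rw [hL, Real.le_log_iff_exp_le hn']
    linarith [Real.exp_one_lt_d9]
  have f1 : (2 : ℝ) ^ n = Real.exp (n * Real.log 2) := by
    rw [Real.exp_nat_mul, Real.exp_log (by norm_num)]
  have f2 : ((n : ℝ) + 1) ^ d ≤ Real.exp (d * (2 * L)) := by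
    rw [Real.exp_nat_mul]
    refine pow_le_pow_left₀ (by positivity) ?_ _
    rw [two_mul, Real.exp_add, hexpL]
    nlinarith
  have f3 : (c : ℝ) ≤ Real.exp (K * L) := by
    rw [Real.exp_nat_mul, hexpL]
    exact_mod_cast hc
  have f4 : (2 : ℝ) ^ (-E) / √(g / (2 * E)) ≤ Real.exp (-(E * Real.log 2) + L) := by
    have h1 : (2 : ℝ) ^ (-E) = Real.exp (-(E * Real.log 2)) := by
      rw [Real.rpow_def_of_pos (by norm_num)]
      congr 1
      ring
    rw [h1, Real.exp_add, div_eq_mul_inv, ← Real.sqrt_inv, hexpL]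
    refine mul_le_mul_of_nonneg_left ?_ (Real.exp_nonneg _)
    rw [Real.sqrt_le_left hn'.le, inv_div, div_le_iff₀ hg0]
    nlinarith
  have f5 : Real.exp (1 / 2) * ((2 : ℝ) ^ (-E) / √(g / (2 * E)))
      ≤ Real.exp (1 / 2 + (-(E * Real.log 2) + L)) := by
    rw [Real.exp_add (1 / 2)]
    exact mul_le_mul_of_nonneg_left f4 (Real.exp_nonneg _)
  calc (2 : ℝ) ^ n * (((n : ℝ) + 1) ^ d) ^ m * (c : ℝ) ^ m *
      (Real.exp (1 / 2) * ((2 : ℝ) ^ (-E) / √(g / (2 * E)))) ^ m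
      ≤ Real.exp (n * Real.log 2) * (Real.exp (d * (2 * L))) ^ m * (Real.exp (K * L)) ^ m *
        (Real.exp (1 / 2 + (-(E * Real.log 2) + L))) ^ m := by
        rw [f1]
        gcongr
    _ = Real.exp (n * Real.log 2 + m * (2 * d * L + K * L + 1 / 2 + L)
          - m * E * Real.log 2) := by
        simp only [← Real.exp_nat_mul, ← Real.exp_add]
        congr 1
        ring
    _ ≤ Real.exp (-(1 / 2) * n) := by
        refine Real.exp_le_exp.2 ?_
        have hmE : 2 * n ≤ m * E := (div_le_iff₀ hE).1 hm1
        have hlog2 := Real.log_two_gt_d9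
        have hnE : 1 ≤ n / E := (one_le_div hE).2 hEn
        have hm3 : (m : ℝ) ≤ 3 * (n / E) := by
          have : 2 * (n : ℝ) / E = 2 * (n / E) := by ring
          linarith
        have hng : 1 ≤ n / E * g := by nlinarith
        have hd2 : (d : ℝ) ≤ 2 * (n / E * g) := by
          have : n * g / E = n / E * g := by ring
          nlinarith
        have hK : (0 : ℝ) ≤ K := Nat.cast_nonneg K
        have hinner : 2 * d * L + K * L + 1 / 2 + L ≤ (n / E * g) * L * (K + 6) := by
          have a1 : d * L ≤ 2 * (n / E * g) * L := by gcongr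
          have a2 : L ≤ n / E * g * L := by nlinarith
          have a3 : K * L ≤ K * (n / E * g * L) := by gcongr
          linarith
        have hprod : m * (2 * d * L + K * L + 1 / 2 + L) ≤ 19 / 100 * n := by
          calc m * (2 * d * L + K * L + 1 / 2 + L)
              ≤ 3 * (n / E) * ((n / E * g) * L * (K + 6)) := by gcongr
            _ = n * (g * (n * L) / E ^ 2 * (3 * K + 18)) := by
                field_simp
                ring
            _ ≤ n * (19 / 100) := by gcongr
            _ = _ := by ring
        nlinarith [mul_le_mul_of_nonneg_right hmE (by linarith : 0 ≤ Real.log 2)]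

/-- `m`-OGP with super-constant `m = ⌈2n/E_n⌉` for energy exponents
`ω(√(n log₂ n)) ≤ E_n ≤ o(n)`, ensemble version over polynomially many
correlated instances. -/
theorem m_ogp_superconstant
    (E : ℕ → ℝ) (hEpos : ∀ n, 0 < E n)
    (hEomega : Tendsto (fun n : ℕ => E n / Real.sqrt ((n : ℝ) * Real.logb 2 n)) atTop atTop)
    (hEo : Tendsto (fun n : ℕ => E n / n) atTop (nhds 0))
    (g : ℕ → ℝ) (hgpos : ∀ n, 0 < g n)
    (hgomega : Tendsto g atTop atTop)
    (hgo : Tendsto (fun n : ℕ => g n * ((n : ℝ) * Real.logb 2 n) / (E n) ^ 2) atTop (nhds 0))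
    (I : ℕ → Finset ℝ) (hI : ∀ n, ↑(I n) ⊆ Set.Icc (0 : ℝ) 1)
    (K : ℕ) (hIcard : ∀ n, (I n).card ≤ n ^ K) :
    ∃ c : ℝ, 0 < c ∧ ∃ N : ℕ, ∀ n : ℕ, N ≤ n →
      (Measure.pi fun _ : Fin (⌈2 * (n : ℝ) / E n⌉₊ + 1) => stdGaussian n)
        {X : Fin (⌈2 * (n : ℝ) / E n⌉₊ + 1) → Fin n → ℝ |
          ∃ σ : Fin ⌈2 * (n : ℝ) / E n⌉₊ → Fin n → ℝ,
            (∀ i, isCube (σ i)) ∧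
            (∀ i j, i < j →
              (1 - 2 * g n / E n) - g n / (2 * n) ≤ ip (σ i) (σ j) / n ∧
              ip (σ i) (σ j) / n ≤ 1 - 2 * g n / E n) ∧
            ∃ τ : Fin ⌈2 * (n : ℝ) / E n⌉₊ → ℝ, (∀ i, τ i ∈ I n) ∧
              ∀ i, |ip (σ i) (fun k => Real.sqrt (1 - τ i ^ 2) * X 0 k + τ i * X i.succ k)|
                / Real.sqrt n ≤ (2 : ℝ) ^ (-(E n))} ≤
      ENNReal.ofReal (Real.exp (-c * n)) := by
  have hε := hgo.eventually (gt_mem_nhds (show (0 : ℝ) < 19 / 100 / (3 * K + 18) by positivity))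
  have hEn := hEo.eventually (gt_mem_nhds (show (0 : ℝ) < 1 by norm_num))
  have hg1 := hgomega.eventually_ge_atTop 1
  obtain ⟨N, hN⟩ := eventually_atTop.1
    (hε.and (hEn.and (hg1.and (eventually_ge_atTop 3))))
  refine ⟨1 / 2, by norm_num, N, fun n hNn => ?_⟩
  obtain ⟨hε, hEn, hg1, hn3⟩ := hN n hNn
  have hn3' : (3 : ℝ) ≤ n := by exact_mod_cast hn3
  have hn' : (0 : ℝ) < n := by linarith
  have hE := hEpos n
  have hg := hgpos n
  have hEn' : E n ≤ n := ((div_lt_one hn').1 hEn).le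
  have hlogb : 1 ≤ Real.logb 2 n := by
    rw [Real.le_logb_iff_rpow_le (by norm_num) hn']
    norm_num
    linarith
  have hlog : Real.log n ≤ Real.logb 2 n := by
    rw [Real.logb, le_div_iff₀ (Real.log_pos (by norm_num))]
    have h0 : 0 ≤ Real.log n := Real.log_nonneg (by linarith)
    nlinarith [Real.log_two_lt_d9]
  have hK : (0 : ℝ) ≤ K := Nat.cast_nonneg K
  rw [lt_div_iff₀ (by positivity)] at hε
  set m := ⌈2 * (n : ℝ) / E n⌉₊ with hm
  have hm1 : 2 * (n : ℝ) / E n ≤ m := Nat.le_ceil _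
  have hm2 : (m : ℝ) ≤ 2 * n / E n + 1 := (Nat.ceil_lt_add_one (by positivity)).le
  have hmpos : 0 < m := Nat.ceil_pos.2 (by positivity)
  -- `g / E ≤ g n log₂ n / E²` is small because `E ≤ n ≤ n log₂ n`.
  have hgE : g n / E n ≤ 19 / 1800 := by
    have h1 : g n / E n ≤ g n * ((n : ℝ) * Real.logb 2 n) / (E n) ^ 2 := by
      rw [div_le_div_iff₀ hE (by positivity)]
      have : E n ≤ (n : ℝ) * Real.logb 2 n := by nlinarith
      nlinarith [mul_le_mul_of_nonneg_left this (mul_nonneg hg.le hE.le)]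
    have h2 : 0 < g n / E n := by positivity
    nlinarith
  have hβeq : 2 * g n / E n = 2 * (g n / E n) := by ring
  have hη : 0 ≤ g n / (2 * n) := by positivity
  have hlameq : g n / (2 * E n) = g n / E n / 2 := by ring
  have hlamle : g n / (2 * E n)
      ≤ 1 - (1 - 2 * g n / E n) - (m : ℝ) * (g n / (2 * n)) := by
    have h1 : (m : ℝ) * (g n / (2 * n)) ≤ (2 * n / E n + 1) * (g n / (2 * n)) := by gcongr
    have h2 : (2 * n / E n + 1) * (g n / (2 * n)) = g n / E n + g n / (2 * n) := by
      field_simp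
    have h3 : g n / (2 * n) ≤ g n / (2 * E n) := by gcongr
    linarith
  refine (union_bound hmpos (by omega) (1 - 2 * g n / E n) (g n / (2 * n)) (g n / (2 * E n))
    ((2 : ℝ) ^ (-(E n))) (by linarith) hη (by positivity) (by linarith) hlamle (by positivity)
    (I n) (hI n) (n * g n / E n + g n / 4) (le_of_eq ?_)).trans (ENNReal.ofReal_le_ofReal ?_)
  · field_simp
    ring
  · refine exponent_bound n m K _ _ (E n) (g n) hn3 hE hEn' hg1 (hIcard n) hm1 hm2
      (Nat.floor_le (by positivity)) (le_trans ?_ hε.le)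
    gcongr
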